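/- arXiv:1704.04389 — 8 statements merged into one kernel-verified Lean document; each statement's English description precedes it below -/
import Mathlib

section
/- Let ā ∈ {0,1}^{n} and b̄ ∈ {0,1}^{n'} be binary sequences, let t be a natural number with t ≤ n and t ≤ n', suppose ā is top t sorted, b̄ is top t sorted, and |ā|₁ ≥ |b̄|₁. Then for every j with 1 ≤ j ≤ t, if b_j = 1 then a_j = 1. -/
/-- If `a` and `b` are binary sequences that are top `t` sorted (their length-`t`
prefixes are nonincreasing and dominate the respective suffixes) and `a` has at
least as many ones as `b`, then the prefix of `a` pointwise dominates the prefix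
of `b`: for every position `j < t`, if `b` has a one there then so does `a`. -/
theorem top_sorted_pointwise_domination (n n' t : ℕ)
    (a : Fin n → Bool) (b : Fin n' → Bool)
    (htn : t ≤ n) (htn' : t ≤ n')
    (ha1 : ∀ i j : Fin n, i ≤ j → (j : ℕ) < t → a j ≤ a i)
    (ha2 : ∀ i j : Fin n, (i : ℕ) < t → t ≤ (j : ℕ) → a j ≤ a i)
    (hb1 : ∀ i j : Fin n', i ≤ j → (j : ℕ) < t → b j ≤ b i)
    (hb2 : ∀ i j : Fin n', (i : ℕ) < t → t ≤ (j : ℕ) → b j ≤ b i)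
    (hcnt : (Finset.univ.filter (fun i : Fin n' => b i = true)).card ≤
            (Finset.univ.filter (fun i : Fin n => a i = true)).card) :
    ∀ j : ℕ, (hj : j < t) → b ⟨j, lt_of_lt_of_le hj htn'⟩ = true →
      a ⟨j, lt_of_lt_of_le hj htn⟩ = true := by
  intro j hj hbj
  by_contra haj
  have h1 : (Finset.univ.filter (fun i : Fin n => a i = true)) ⊆
      Finset.Iio (⟨j, lt_of_lt_of_le hj htn⟩ : Fin n) := by
    intro i hi
    simp only [Finset.mem_filter, Finset.mem_univ, true_and] at hi
    rw [Finset.mem_Iio]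
    by_contra hlt
    apply haj
    have key : a i ≤ a ⟨j, lt_of_lt_of_le hj htn⟩ := by
      by_cases hit : (i : ℕ) < t
      · exact ha1 _ _ (not_lt.mp hlt) hit
      · exact ha2 _ _ hj (not_lt.mp hit)
    exact key hi
  have h2 : Finset.Iic (⟨j, lt_of_lt_of_le hj htn'⟩ : Fin n') ⊆
      (Finset.univ.filter (fun i : Fin n' => b i = true)) := by
    intro i hi
    rw [Finset.mem_Iic] at hi
    simp only [Finset.mem_filter, Finset.mem_univ, true_and]
    exact hb1 _ _ hi hj hbj
  have c1 := Finset.card_le_card h1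
  have c2 := Finset.card_le_card h2
  rw [Fin.card_Iio] at c1
  rw [Fin.card_Iic] at c2
  simp only at c1 c2
  omega
end

section
/- Let m ≥ 1 and k ≥ 1 be natural numbers, let n₁ ≥ n₂ ≥ … ≥ n_m ≥ 1 be natural numbers, and set l_i = min(n_i, ⌊k/i⌋) for 1 ≤ i ≤ m. Let z¹, …, z^m be binary sequences with z^i ∈ {0,1}^{n_i}, such that each z^i is top l_i sorted and |z¹|₁ ≥ |z²|₁ ≥ … ≥ |z^m|₁. Then Σ_{i=1}^{m} |pref(l_i, z^i)|₁ ≥ min(k, Σ_{i=1}^{m} |z^i|₁); that is, the concatenation of the prefixes pref(l₁,z¹) :: … :: pref(l_m,z^m) contains the k largest elements of z¹ :: … :: z^m. -/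
/-- A prefix of a top `l` sorted sequence has at least `min l c` ones. -/
lemma prefix_count_aux (n l : ℕ) (hl : l ≤ n) (z : Fin n → Bool)
    (h2 : ∀ p q : Fin n, (p : ℕ) < l → l ≤ (q : ℕ) → z q ≤ z p) :
    min l (Finset.univ.filter (fun t : Fin n => z t = true)).card ≤
      (Finset.univ.filter (fun t : Fin n => (t : ℕ) < l ∧ z t = true)).card := by
  by_cases h : ∀ p : Fin n, (p : ℕ) < l → z p = true
  · refine (min_le_left _ _).trans ?_
    have : (Finset.univ.map (Fin.castLEEmb hl)) ⊆
        (Finset.univ.filter (fun t : Fin n => (t : ℕ) < l ∧ z t = true)) := by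
      intro x hx
      simp only [Finset.mem_map, Finset.mem_univ, true_and] at hx
      obtain ⟨a, rfl⟩ := hx
      have ha : ((Fin.castLEEmb hl a : Fin n) : ℕ) < l := a.2
      simp only [Finset.mem_filter, Finset.mem_univ, true_and]
      exact ⟨ha, h _ ha⟩
    simpa using Finset.card_le_card this
  · push Not at h
    obtain ⟨p, hp, hz⟩ := h
    refine (min_le_right _ _).trans (Finset.card_le_card ?_)
    intro q hq
    simp only [Finset.mem_filter, Finset.mem_univ, true_and] at hq ⊢
    refine ⟨?_, hq⟩
    by_contra hlt
    have := h2 p q hp (not_lt.mp hlt)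
    simp_all
    exact absurd this (by decide)

/-- The arithmetic core. -/
lemma sum_min_aux (m k : ℕ) (c : Fin m → ℕ) (hc : ∀ i j : Fin m, i ≤ j → c j ≤ c i) :
    min k (∑ i, c i) ≤ ∑ i : Fin m, min (k / ((i : ℕ) + 1)) (c i) := by
  by_cases h : ∀ i : Fin m, c i ≤ k / ((i : ℕ) + 1)
  · refine (min_le_right _ _).trans (le_of_eq ?_)
    exact Finset.sum_congr rfl fun i _ => (min_eq_right (h i)).symm
  · push Not at h
    obtain ⟨t, ht, hmin⟩ := WellFounded.has_min (wellFounded_lt (α := Fin m))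
      {i : Fin m | k / ((i : ℕ) + 1) < c i} h
    simp only [Set.mem_ofPred_eq] at ht hmin
    refine (min_le_left _ _).trans ?_
    have h1 : (Finset.Iio t).card • (k / ((t : ℕ) + 1) + 1) ≤
        ∑ i ∈ Finset.Iio t, min (k / ((i : ℕ) + 1)) (c i) := by
      apply Finset.card_nsmul_le_sum
      intro i hi
      have hi := Finset.mem_Iio.mp hi
      have a : c i ≤ k / ((i : ℕ) + 1) := not_lt.mp fun h' => hmin i h' hi
      rw [min_eq_right a]
      exact ht.trans_le (hc i t hi.le)
    have h2 : ∑ i ∈ insert t (Finset.Iio t), min (k / ((i : ℕ) + 1)) (c i) ≤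
        ∑ i : Fin m, min (k / ((i : ℕ) + 1)) (c i) :=
      Finset.sum_le_sum_of_subset (Finset.subset_univ _)
    rw [Finset.sum_insert (by simp), min_eq_left ht.le] at h2
    rw [Fin.card_Iio, smul_eq_mul] at h1
    have h3 := Nat.div_add_mod k ((t : ℕ) + 1)
    have h4 := Nat.mod_lt k (Nat.succ_pos (t : ℕ))
    simp only [Nat.succ_eq_add_one] at h4
    nlinarith

/-- Counting core of Theorem 1 (m-Wise Selection Network): with `lᵢ = min(nᵢ, ⌊k/i⌋)`,
if each binary sequence `zⁱ ∈ {0,1}^{nᵢ}` is top `lᵢ` sorted and the numbers of ones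
in `z¹, …, z^m` are nonincreasing, then the prefixes `pref(lᵢ, zⁱ)` jointly contain
the `k` largest elements: the total number of ones in the prefixes is at least
`min(k, total number of ones)`. -/
theorem mwise_prefixes_contain_top_k (m k : ℕ) (hm : 1 ≤ m) (hk : 1 ≤ k)
    (n : Fin m → ℕ) (hn1 : ∀ i, 1 ≤ n i)
    (hmono : ∀ i j : Fin m, i ≤ j → n j ≤ n i)
    (l : Fin m → ℕ) (hl : ∀ i : Fin m, l i = min (n i) (k / ((i : ℕ) + 1)))
    (z : (i : Fin m) → Fin (n i) → Bool)
    (htop1 : ∀ i : Fin m, ∀ p q : Fin (n i), p ≤ q → (q : ℕ) < l i → z i q ≤ z i p)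
    (htop2 : ∀ i : Fin m, ∀ p q : Fin (n i), (p : ℕ) < l i → l i ≤ (q : ℕ) → z i q ≤ z i p)
    (hcnt : ∀ i j : Fin m, i ≤ j →
      (Finset.univ.filter (fun t : Fin (n j) => z j t = true)).card ≤
        (Finset.univ.filter (fun t : Fin (n i) => z i t = true)).card) :
    min k (∑ i : Fin m, (Finset.univ.filter (fun t : Fin (n i) => z i t = true)).card) ≤
      ∑ i : Fin m,
        (Finset.univ.filter (fun t : Fin (n i) => (t : ℕ) < l i ∧ z i t = true)).card := by
  refine (sum_min_aux m k _ hcnt).trans (Finset.sum_le_sum fun i _ => ?_)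
  have h := prefix_count_aux (n i) (l i) (by rw [hl]; exact min_le_left _ _) (z i) (htop2 i)
  refine le_trans ?_ h
  have hcn : (Finset.univ.filter (fun t : Fin (n i) => z i t = true)).card ≤ n i := by
    simpa using Finset.card_le_univ (Finset.univ.filter (fun t : Fin (n i) => z i t = true))
  rw [hl i]
  exact le_min (le_min ((min_le_right _ _).trans hcn) (min_le_left _ _)) (min_le_right _ _)
end

section
/- Let m ≥ 1 and k ≥ 1 be natural numbers, let n₁, …, n_m ≥ 1 be natural numbers, and set k_i = min(k, n_i) for 1 ≤ i ≤ m. Let y¹, …, y^m be binary sequences with y^i ∈ {0,1}^{n_i} such that each y^i is top k_i sorted. Then Σ_{i=1}^{m} |pref(k_i, y^i)|₁ ≥ min(k, Σ_{i=1}^{m} |y^i|₁); that is, the concatenation pref(k₁,y¹) :: … :: pref(k_m,y^m) contains the k largest elements of y¹ :: … :: y^m. -/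
/-- Counting core of Theorem 2 (m-Odd-Even Selection Network): with `kᵢ = min(k, nᵢ)`,
if each binary sequence `yⁱ ∈ {0,1}^{nᵢ}` is top `kᵢ` sorted, then the prefixes
`pref(kᵢ, yⁱ)` jointly contain the `k` largest elements: the total number of ones in
the prefixes is at least `min(k, total number of ones)`. -/
theorem oe_prefixes_contain_top_k (m k : ℕ) (hm : 1 ≤ m) (hk : 1 ≤ k)
    (n : Fin m → ℕ) (hn1 : ∀ i, 1 ≤ n i)
    (ks : Fin m → ℕ) (hks : ∀ i : Fin m, ks i = min k (n i))
    (y : (i : Fin m) → Fin (n i) → Bool)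
    (htop1 : ∀ i : Fin m, ∀ p q : Fin (n i), p ≤ q → (q : ℕ) < ks i → y i q ≤ y i p)
    (htop2 : ∀ i : Fin m, ∀ p q : Fin (n i), (p : ℕ) < ks i → ks i ≤ (q : ℕ) → y i q ≤ y i p) :
    min k (∑ i : Fin m, (Finset.univ.filter (fun t : Fin (n i) => y i t = true)).card) ≤
      ∑ i : Fin m,
        (Finset.univ.filter (fun t : Fin (n i) => (t : ℕ) < ks i ∧ y i t = true)).card := by
  by_cases h : ∃ i : Fin m, ∃ q : Fin (n i), ks i ≤ (q : ℕ) ∧ y i q = true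
  · obtain ⟨i, q, hq, hy⟩ := h
    have hqn := q.isLt
    have hki := hks i
    have hkk : ks i = k := by omega
    have hkn : k ≤ n i := by omega
    refine (min_le_left _ _).trans (le_trans ?_ (Finset.single_le_sum
      (f := fun i : Fin m =>
        (Finset.univ.filter (fun t : Fin (n i) => (t : ℕ) < ks i ∧ y i t = true)).card)
      (fun _ _ => Nat.zero_le _) (Finset.mem_univ i)))
    have hsub : (Finset.univ.map (Fin.castLEEmb hkn)) ⊆
        Finset.univ.filter (fun t : Fin (n i) => (t : ℕ) < ks i ∧ y i t = true) := by
      intro t ht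
      obtain ⟨s, -, rfl⟩ := Finset.mem_map.1 ht
      have hlt : ((Fin.castLEEmb hkn s : Fin (n i)) : ℕ) < ks i := by
        rw [hkk]; exact s.isLt
      refine Finset.mem_filter.2 ⟨Finset.mem_univ _, hlt, ?_⟩
      have := htop2 i _ q hlt hq
      rw [hy] at this
      exact top_le_iff.1 this
    have := Finset.card_le_card hsub
    simpa using this
  · push Not at h
    refine (min_le_right _ _).trans (Finset.sum_le_sum fun i _ => Finset.card_le_card ?_)
    intro t ht
    have hy := (Finset.mem_filter.1 ht).2
    refine Finset.mem_filter.2 ⟨Finset.mem_univ _, ?_, hy⟩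
    by_contra hc
    exact h i t (not_lt.1 hc) hy
end

section
/- Let h ≥ 1 and let p ≥ q ≥ r ≥ s be integers with p − q ≤ 2h, q − r ≤ 2h and r − s ≤ 2h. Let a₁ ≤ a₂ ≤ a₃ ≤ a₄ be the nondecreasing rearrangement of the four integers p, q + h, r + 2h, s + 3h. Then a₂ − a₁ ≤ h, a₃ − a₂ ≤ h and a₄ − a₃ ≤ h. Consequently, the integers p' = a₁, q' = a₂ − h, r' = a₃ − 2h, s' = a₄ − 3h satisfy p' ≥ q' ≥ r' ≥ s', p' − q' ≤ h, q' − r' ≤ h, r' − s' ≤ h, and p' + q' + r' + s' = p + q + r + s. -/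
theorem pair_cases {c d y z : ℤ} (e : ({c, d} : Multiset ℤ) = {y, z}) :
    (c = y ∧ d = z) ∨ (c = z ∧ d = y) := by
  have hc : c ∈ ({y, z} : Multiset ℤ) := by rw [← e]; simp
  simp only [Multiset.insert_eq_cons, Multiset.mem_cons, Multiset.mem_singleton] at hc e
  rcases hc with rfl | rfl
  · simp at e; exact Or.inl ⟨rfl, e⟩
  · rw [← Multiset.cons_zero c, Multiset.cons_swap y] at e
    simp at e; exact Or.inr ⟨rfl, e⟩

theorem triple_cases {b c d x y z : ℤ} (e : ({b, c, d} : Multiset ℤ) = {x, y, z}) :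
    (b = x ∧ ({c, d} : Multiset ℤ) = {y, z}) ∨ (b = y ∧ ({c, d} : Multiset ℤ) = {x, z}) ∨
    (b = z ∧ ({c, d} : Multiset ℤ) = {x, y}) := by
  have hb : b ∈ ({x, y, z} : Multiset ℤ) := by rw [← e]; simp
  simp only [Multiset.insert_eq_cons, Multiset.mem_cons, Multiset.mem_singleton] at hb e ⊢
  rcases hb with rfl | rfl | rfl
  · exact Or.inl ⟨rfl, (Multiset.cons_inj_right _).1 e⟩
  · rw [Multiset.cons_swap x] at e
    exact Or.inr (Or.inl ⟨rfl, (Multiset.cons_inj_right _).1 e⟩)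
  · rw [← Multiset.cons_zero b, Multiset.cons_swap y, Multiset.cons_swap x] at e
    exact Or.inr (Or.inr ⟨rfl, (Multiset.cons_inj_right _).1 e⟩)

theorem quad_cases {a b c d w x y z : ℤ} (e : ({a, b, c, d} : Multiset ℤ) = {w, x, y, z}) :
    (a = w ∧ ({b, c, d} : Multiset ℤ) = {x, y, z}) ∨
    (a = x ∧ ({b, c, d} : Multiset ℤ) = {w, y, z}) ∨
    (a = y ∧ ({b, c, d} : Multiset ℤ) = {w, x, z}) ∨
    (a = z ∧ ({b, c, d} : Multiset ℤ) = {w, x, y}) := by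
  have ha : a ∈ ({w, x, y, z} : Multiset ℤ) := by rw [← e]; simp
  simp only [Multiset.insert_eq_cons, Multiset.mem_cons, Multiset.mem_singleton] at ha e ⊢
  rcases ha with rfl | rfl | rfl | rfl
  · exact Or.inl ⟨rfl, (Multiset.cons_inj_right _).1 e⟩
  · rw [Multiset.cons_swap w] at e
    exact Or.inr (Or.inl ⟨rfl, (Multiset.cons_inj_right _).1 e⟩)
  · rw [Multiset.cons_swap x, Multiset.cons_swap w] at e
    exact Or.inr (Or.inr (Or.inl ⟨rfl, (Multiset.cons_inj_right _).1 e⟩))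
  · rw [← Multiset.cons_zero a, Multiset.cons_swap y, Multiset.cons_swap x,
      Multiset.cons_swap w] at e
    exact Or.inr (Or.inr (Or.inr ⟨rfl, (Multiset.cons_inj_right _).1 e⟩))

/-- Core invariant of Lemma 4 (lma:4wsel): let `p ≥ q ≥ r ≥ s` with consecutive
differences at most `2h`, and let `a₁ ≤ a₂ ≤ a₃ ≤ a₄` be the nondecreasing
rearrangement of `p, q + h, r + 2h, s + 3h`. Then consecutive differences of the
`aᵢ` are at most `h`, and `p' = a₁`, `q' = a₂ − h`, `r' = a₃ − 2h`, `s' = a₄ − 3h`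
satisfy `p' ≥ q' ≥ r' ≥ s'`, have consecutive differences at most `h`, and preserve
the total `p + q + r + s`. -/
theorem slope_sort_invariant (h p q r s a₁ a₂ a₃ a₄ : ℤ) (hh : 1 ≤ h)
    (hpq : q ≤ p) (hqr : r ≤ q) (hrs : s ≤ r)
    (h1 : p - q ≤ 2 * h) (h2 : q - r ≤ 2 * h) (h3 : r - s ≤ 2 * h)
    (hsort : a₁ ≤ a₂ ∧ a₂ ≤ a₃ ∧ a₃ ≤ a₄)
    (hperm : ({a₁, a₂, a₃, a₄} : Multiset ℤ) = ({p, q + h, r + 2 * h, s + 3 * h} : Multiset ℤ)) :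
    a₂ - a₁ ≤ h ∧ a₃ - a₂ ≤ h ∧ a₄ - a₃ ≤ h ∧
    a₂ - h ≤ a₁ ∧ a₃ - 2 * h ≤ a₂ - h ∧ a₄ - 3 * h ≤ a₃ - 2 * h ∧
    a₁ - (a₂ - h) ≤ h ∧ (a₂ - h) - (a₃ - 2 * h) ≤ h ∧ (a₃ - 2 * h) - (a₄ - 3 * h) ≤ h ∧
    a₁ + (a₂ - h) + (a₃ - 2 * h) + (a₄ - 3 * h) = p + q + r + s := by
  obtain ⟨s1, s2, s3⟩ := hsort
  rcases quad_cases hperm with ⟨e1, e⟩ | ⟨e1, e⟩ | ⟨e1, e⟩ | ⟨e1, e⟩ <;>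
  rcases triple_cases e with ⟨e2, ee⟩ | ⟨e2, ee⟩ | ⟨e2, ee⟩ <;>
  rcases pair_cases ee with ⟨e3, e4⟩ | ⟨e3, e4⟩ <;>
  clear hperm e ee <;>
  refine ⟨?_, ?_, ?_, ?_, ?_, ?_, ?_, ?_, ?_, ?_⟩ <;> omega
end

section
/- Let K, k, l be natural numbers with K ≥ k + l and 0 ≤ l − k ≤ 2. Let ā ∈ {0,1}^{n₁} and b̄ ∈ {0,1}^{n₂} with n₁ ≥ n₂, l ≤ n₁, k ≤ n₂ and k + l ≤ n₁ + n₂, such that ā is top l full and b̄ is top k full. Let z̄ ∈ {0,1}^{n₁+n₂} be the interleaving of ā and b̄ (z_{2i−1} = a_i and z_{2i} = b_i for 1 ≤ i ≤ n₂, followed by the remaining elements a_{n₂+1}, …, a_{n₁}). Let z̄' be obtained from z̄ by replacing, for each 1 ≤ i ≤ ⌊min(K, n₁+n₂−1)/2⌋, the pair (z_{2i}, z_{2i+1}) by (max(z_{2i}, z_{2i+1}), min(z_{2i}, z_{2i+1})). Then z̄' is top (l + k) full, i.e. z'_j = 1 for all 1 ≤ j ≤ l + k. -/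
/-- Observation 3 (obs:oec2): let `a` be top `l` full and `b` top `k` full with
`0 ≤ l − k ≤ 2` and `K ≥ k + l`. Interleave them in row-major order into `z`
(0-indexed: `z_{2i} = a_i`, `z_{2i+1} = b_i` for `i < n₂`, followed by the rest of
`a`), and let `z'` be obtained by sorting, for each 1-indexed pair
`(z_{2i}, z_{2i+1})` with `1 ≤ i ≤ ⌊min(K, n₁+n₂−1)/2⌋`, that pair into
nonincreasing order (here 0-indexed as positions `2i−1` and `2i`). Then `z'` is
top `l + k` full. -/
theorem oe_combine_full (K k l n₁ n₂ : ℕ) (a b z z' : ℕ → Bool)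
    (hK : k + l ≤ K) (hkl1 : k ≤ l) (hkl2 : l ≤ k + 2)
    (hn : n₂ ≤ n₁) (hln : l ≤ n₁) (hkn : k ≤ n₂) (hsum : k + l ≤ n₁ + n₂)
    (ha : ∀ j, j < l → a j = true) (hb : ∀ j, j < k → b j = true)
    (hz : ∀ j, j < n₁ + n₂ →
      z j = if j < 2 * n₂ then (if j % 2 = 0 then a (j / 2) else b (j / 2)) else a (j - n₂))
    (M : ℕ) (hM : M = min K (n₁ + n₂ - 1) / 2)
    (hz'pairs : ∀ i, 1 ≤ i → i ≤ M →
      z' (2 * i - 1) = max (z (2 * i - 1)) (z (2 * i)) ∧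
      z' (2 * i) = min (z (2 * i - 1)) (z (2 * i)))
    (hz'rest : ∀ j, j < n₁ + n₂ → (∀ i, 1 ≤ i → i ≤ M → j ≠ 2 * i - 1 ∧ j ≠ 2 * i) →
      z' j = z j) :
    ∀ j, j < l + k → z' j = true := by
  have T1 : ∀ j, j < l + k → (j < 2 * k ∨ j % 2 = 0 ∨ n₂ = k) → z j = true := by
    intro j hj h
    rw [hz j (by omega)]
    split_ifs with h1 h2
    · exact ha _ (by omega)
    · exact hb _ (by omega)
    · exact ha _ (by omega)
  have T2 : l = k + 2 → k < n₂ → z (2 * k + 2) = true := by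
    intro h h'
    rw [hz _ (by omega)]
    split_ifs with h1 h2
    · exact ha _ (by omega)
    · omega
    · exact ha _ (by omega)
  intro j hj
  by_cases hp : ∃ i, 1 ≤ i ∧ i ≤ M ∧ (j = 2 * i - 1 ∨ j = 2 * i)
  · obtain ⟨i, hi1, hiM, h | h⟩ := hp
    · rw [h, (hz'pairs i hi1 hiM).1]
      by_cases hc : j < 2 * k ∨ n₂ = k
      · have := T1 (2 * i - 1) (by omega) (by omega)
        rw [this]; simp
      · have h2 := T2 (by omega) (by omega)
        have h3 : 2 * i = 2 * k + 2 := by omega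
        rw [h3, h2]; simp
    · rw [h, (hz'pairs i hi1 hiM).2, T1 (2 * i - 1) (by omega) (by omega),
        T1 (2 * i) (by omega) (by omega)]
      simp
  · push Not at hp
    rw [hz'rest j (by omega) hp]
    apply T1 j hj
    by_contra hc
    have := hp (k + 1) (by omega) (by omega)
    omega
end

section
/- Let k' ≥ 3 be a natural number, and let ā ∈ {0,1}^{na} and b̄ ∈ {0,1}^{nb} be binary sequences with na ≥ ⌊k'/2⌋ + 2 and nb ≥ ⌊k'/2⌋, such that ā is top (⌊k'/2⌋ + 2) sorted, b̄ is top ⌊k'/2⌋ sorted, 0 ≤ |ā|₁ − |b̄|₁ ≤ 4, and |ā|₁ + |b̄|₁ > k'. Let q = |pref(⌊k'/2⌋ + 2, ā)|₁ and r = |pref(⌊k'/2⌋, b̄)|₁. Then q + r ≥ k'. -/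
/-- In a sequence whose first `t` elements dominate the rest, the prefix either
contains all the ones, or consists of ones only. -/
lemma top_prefix_count (n t : ℕ) (ht : t ≤ n) (a : Fin n → Bool)
    (h2 : ∀ i j : Fin n, (i : ℕ) < t → t ≤ (j : ℕ) → a j ≤ a i) :
    (Finset.univ.filter (fun i : Fin n => (i : ℕ) < t ∧ a i = true)).card =
      (Finset.univ.filter (fun i : Fin n => a i = true)).card ∨
    t ≤ (Finset.univ.filter (fun i : Fin n => (i : ℕ) < t ∧ a i = true)).card := by
  by_cases h : ∃ j : Fin n, t ≤ (j : ℕ) ∧ a j = true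
  · right
    obtain ⟨j, hj, haj⟩ := h
    have hsub : Finset.univ.map (Fin.castLEEmb ht) ⊆
        Finset.univ.filter (fun i : Fin n => (i : ℕ) < t ∧ a i = true) := by
      intro x hx
      simp only [Finset.mem_map, Finset.mem_univ, true_and] at hx
      obtain ⟨y, rfl⟩ := hx
      have hy : ((Fin.castLEEmb ht y : Fin n) : ℕ) < t := y.2
      have h3 := h2 _ j hy hj
      rw [haj] at h3
      simp only [Finset.mem_filter, Finset.mem_univ, true_and]
      exact ⟨hy, top_le_iff.mp h3⟩
    have := Finset.card_le_card hsub
    simpa using this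
  · left
    congr 1
    ext i
    simp only [Finset.mem_filter, Finset.mem_univ, true_and]
    constructor
    · exact fun hi => hi.2
    · intro hi
      refine ⟨?_, hi⟩
      by_contra hc
      exact h ⟨i, by omega, hi⟩

/-- Case (iii) of the inductive step of the correctness lemma of the 4-Odd-Even
Merging Network: if `a` is top `⌊k'/2⌋ + 2` sorted, `b` is top `⌊k'/2⌋` sorted,
`0 ≤ |a|₁ − |b|₁ ≤ 4` and `|a|₁ + |b|₁ > k'`, then the numbers of ones
`q = |pref(⌊k'/2⌋+2, a)|₁` and `r = |pref(⌊k'/2⌋, b)|₁` satisfy `q + r ≥ k'`. -/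
theorem oe_merge_case_iii (k' na nb : ℕ) (hk' : 3 ≤ k')
    (a : Fin na → Bool) (b : Fin nb → Bool)
    (hna : k' / 2 + 2 ≤ na) (hnb : k' / 2 ≤ nb)
    (ha1 : ∀ i j : Fin na, i ≤ j → (j : ℕ) < k' / 2 + 2 → a j ≤ a i)
    (ha2 : ∀ i j : Fin na, (i : ℕ) < k' / 2 + 2 → k' / 2 + 2 ≤ (j : ℕ) → a j ≤ a i)
    (hb1 : ∀ i j : Fin nb, i ≤ j → (j : ℕ) < k' / 2 → b j ≤ b i)
    (hb2 : ∀ i j : Fin nb, (i : ℕ) < k' / 2 → k' / 2 ≤ (j : ℕ) → b j ≤ b i)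
    (hdiff1 : (Finset.univ.filter (fun i : Fin nb => b i = true)).card ≤
              (Finset.univ.filter (fun i : Fin na => a i = true)).card)
    (hdiff2 : (Finset.univ.filter (fun i : Fin na => a i = true)).card ≤
              (Finset.univ.filter (fun i : Fin nb => b i = true)).card + 4)
    (htot : k' < (Finset.univ.filter (fun i : Fin na => a i = true)).card +
                 (Finset.univ.filter (fun i : Fin nb => b i = true)).card) :
    k' ≤ (Finset.univ.filter (fun i : Fin na => (i : ℕ) < k' / 2 + 2 ∧ a i = true)).card +
         (Finset.univ.filter (fun i : Fin nb => (i : ℕ) < k' / 2 ∧ b i = true)).card := by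
  have hA := top_prefix_count na (k' / 2 + 2) hna a ha2
  have hB := top_prefix_count nb (k' / 2) hnb b hb2
  omega
end

section
/- For every real number k ≥ 4: k·log₂k + (7/6)·k − 5 < 5k·log₂k − 6k + 6, and (15/4)·k·log₂k − (33/24)·k − 10 < (15/2)·k·log₂k − 9k + 9. -/
/-- Corollary 2 (crly:pw): for `k ≥ 4` the 4-Wise Merging Network uses fewer
variables and fewer clauses than the three 2-column Pairwise Merging Networks it
replaces. -/
theorem four_wise_smaller (k : ℝ) (hk : 4 ≤ k) :
    k * Real.logb 2 k + (7 / 6) * k - 5 < 5 * k * Real.logb 2 k - 6 * k + 6 ∧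
    (15 / 4) * k * Real.logb 2 k - (33 / 24) * k - 10 <
      (15 / 2) * k * Real.logb 2 k - 9 * k + 9 := by
  have h2 : 2 ≤ Real.logb 2 k := by
    rw [Real.le_logb_iff_rpow_le (by norm_num) (by linarith)]
    norm_num
    exact hk
  have hm : k * 2 ≤ k * Real.logb 2 k := mul_le_mul_of_nonneg_left h2 (by linarith)
  refine ⟨by linarith, ?_⟩
  rcases le_total k 8 with h | h
  · linarith
  · have h3 : 3 ≤ Real.logb 2 k := by
      rw [Real.le_logb_iff_rpow_le (by norm_num) (by linarith)]
      norm_num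
      exact h
    have hm3 : k * 3 ≤ k * Real.logb 2 k := mul_le_mul_of_nonneg_left h3 (by linarith)
    linarith
end

section
/- Let B be a real-valued function defined on pairs (s, k) where s ranges over powers of two with s ≥ 4 and k over nonnegative reals, satisfying B(4, k) = 0 for all k, and B(s, k) = B(s/2, k/2 + 2) + B(s/2, k/2) + k + 1 for all s > 4. Then for every power of two s ≥ 4 and every real k ≥ 0: B(s, k) ≤ k·log₂(s/2) − k − 2·log₂s + (3/2)·s + 1. -/
/-- The key claim in the proof of Lemma 5 (lma:4oe_vars_cls): the recurrence
`B(4,k) = 0`, `B(s,k) = B(s/2, k/2+2) + B(s/2, k/2) + k + 1` (for powers of two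
`s > 4`) satisfies `B(s,k) ≤ k·log₂(s/2) − k − 2·log₂ s + (3/2)s + 1`. -/
theorem B_bound (B : ℕ → ℝ → ℝ)
    (hbase : ∀ k : ℝ, B 4 k = 0)
    (hrec : ∀ s : ℕ, (∃ t : ℕ, s = 2 ^ t) → 4 < s → ∀ k : ℝ, 0 ≤ k →
      B s k = B (s / 2) (k / 2 + 2) + B (s / 2) (k / 2) + k + 1) :
    ∀ s : ℕ, (∃ t : ℕ, s = 2 ^ t) → 4 ≤ s → ∀ k : ℝ, 0 ≤ k →
      B s k ≤ k * Real.logb 2 ((s : ℝ) / 2) - k - 2 * Real.logb 2 (s : ℝ) +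
        (3 / 2) * (s : ℝ) + 1 := by
  have key : ∀ n : ℕ, ∀ k : ℝ, 0 ≤ k →
      B (2 ^ (n + 2)) k ≤ k * n - 2 * (n + 2) + (3 / 2) * (2 : ℝ) ^ (n + 2) + 1 := by
    intro n
    induction n with
    | zero =>
      intro k _
      have h := hbase k
      norm_num [h]
    | succ n ih =>
      intro k hk
      have h4 : 4 < 2 ^ (n + 1 + 2) := by
        have : 0 < 2 ^ n := by positivity
        rw [show n + 1 + 2 = n + 3 from rfl, pow_add]
        omega
      have h2 : 2 ^ (n + 1 + 2) / 2 = 2 ^ (n + 2) := by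
        rw [show n + 1 + 2 = (n + 2) + 1 from rfl, pow_succ]
        omega
      have h := hrec _ ⟨_, rfl⟩ h4 k hk
      rw [h2] at h
      have i1 := ih (k / 2 + 2) (by linarith)
      have i2 := ih (k / 2) (by linarith)
      rw [h]
      have e : (2 : ℝ) ^ (n + 1 + 2) = 2 * 2 ^ (n + 2) := by ring
      rw [e]
      push_cast
      linarith
  rintro s ⟨t, rfl⟩ hs k hk
  obtain ⟨n, rfl⟩ : ∃ n, t = n + 2 := by
    refine ⟨t - 2, ?_⟩
    have : 2 ≤ t := by
      by_contra! h
      interval_cases t <;> norm_num at hs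
    omega
  have h := key n k hk
  have l1 : Real.logb 2 (((2 ^ (n + 2) : ℕ) : ℝ) / 2) = n + 1 := by
    have : (((2 ^ (n + 2) : ℕ) : ℝ) / 2) = 2 ^ (n + 1) := by
      push_cast
      ring
    rw [this, Real.logb_pow, Real.logb_self_eq_one (by norm_num)]
    push_cast
    ring
  have l2 : Real.logb 2 ((2 ^ (n + 2) : ℕ) : ℝ) = n + 2 := by
    push_cast
    rw [Real.logb_pow, Real.logb_self_eq_one (by norm_num)]
    push_cast
    ring
  rw [l1, l2]
  push_cast
  linarith
end
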